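/- arXiv:1009.1762 — 4 statements merged into one kernel-verified Lean document; each statement's English description precedes it below -/
import Mathlib

section
/- Assume the improper integral ∫₀^∞ h(s) ds converges and equals 1/2, and set q(x) = μ ∫_x^∞ h(s) ds, so that M(x) = 1/2 − μ∫₀^x h(s)ds = (1−μ)/2 + q(x). Let r_ξ = S_ξ^{−1} q (with q restricted to (0,ξ)). Then S_ξ^{−1} 1 = (1/(1−μ)) [1 − r_ξ(x) − r_ξ(ξ−x)] in L²(0,ξ). -/
open MeasureTheory Complex Set Filter
open scoped ComplexInnerProductSpace

noncomputable section

lemma aux_cont (ρ : ℝ → ℝ) (hρ_int : Integrable ρ) (h : ℝ → ℝ)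
    (hh : ∀ x : ℝ, (h x : ℂ) =
      (1 / (2 * Real.pi)) * ∫ l : ℝ, Complex.exp (Complex.I * x * l) * (ρ l : ℂ)) :
    Continuous h := by
  have h1 : Continuous (fun x : ℝ => ∫ l : ℝ, Complex.exp (Complex.I * x * l) * (ρ l : ℂ)) := by
    refine continuous_of_dominated (bound := fun l => ‖ρ l‖) ?_ ?_ hρ_int.norm ?_
    · intro x
      refine AEStronglyMeasurable.mul ?_ ?_
      · exact (by fun_prop : Continuous fun l : ℝ =>
          Complex.exp (Complex.I * x * l)).aestronglyMeasurable
      · exact hρ_int.ofReal.aestronglyMeasurable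
    · intro x
      refine Eventually.of_forall fun l => ?_
      have : Complex.I * x * l = ((x * l : ℝ) : ℂ) * Complex.I := by push_cast; ring
      rw [norm_mul, this, Complex.norm_exp_ofReal_mul_I]
      simp
    · refine Eventually.of_forall fun l => ?_
      fun_prop
  have h2 : Continuous (fun x : ℝ => (h x : ℂ)) := by
    simp_rw [hh]
    exact continuous_const.mul h1
  exact (Complex.continuous_re.comp h2)

lemma aux_even (ρ : ℝ → ℝ) (hρ_even : ∀ l : ℝ, ρ (-l) = ρ l) (h : ℝ → ℝ)
    (hh : ∀ x : ℝ, (h x : ℂ) =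
      (1 / (2 * Real.pi)) * ∫ l : ℝ, Complex.exp (Complex.I * x * l) * (ρ l : ℂ)) (x : ℝ) :
    h (-x) = h x := by
  have : (h (-x) : ℂ) = h x := by
    rw [hh, hh, ← integral_neg_eq_self]
    congr 2
    ext l
    rw [hρ_even]
    push_cast
    ring_nf
  exact_mod_cast this

lemma aux_refl (ξ : ℝ) : MeasurePreserving (fun x : ℝ => ξ - x)
    (volume.restrict (Ioo (0 : ℝ) ξ)) (volume.restrict (Ioo (0 : ℝ) ξ)) := by
  have h1 := (Measure.measurePreserving_sub_left (volume : Measure ℝ) ξ).restrict_preimage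
    (measurableSet_Ioo (a := (0:ℝ)) (b := ξ))
  have h2 : (fun x : ℝ => ξ - x) ⁻¹' Ioo (0 : ℝ) ξ = Ioo 0 ξ := by
    ext x
    simp only [mem_preimage, mem_Ioo]
    constructor <;> rintro ⟨a, b⟩ <;> constructor <;> linarith
  rwa [h2] at h1

lemma aux_int (ξ : ℝ) (g : ℝ → ℂ) :
    ∫ t in Ioo (0 : ℝ) ξ, g (ξ - t) = ∫ t in Ioo (0 : ℝ) ξ, g t :=
  (aux_refl ξ).integral_comp (Homeomorph.subLeft ξ).measurableEmbedding g

/-- Assume `∫₀^∞ h = 1/2` (improper), set `q(x) = μ ∫_x^∞ h(s) ds` and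
`r_ξ = S_ξ^{−1} q`. Then `S_ξ^{−1} 1 = (1/(1−μ)) [1 − r_ξ(x) − r_ξ(ξ−x)]` in `L²(0,ξ)`. -/
theorem statement4
    (U : ℝ) (hU : 0 < U) (ρ : ℝ → ℝ)
    (hρ_even : ∀ l : ℝ, ρ (-l) = ρ l)
    (hρ_int : Integrable ρ)
    (hρ_bd : ∀ l : ℝ, |ρ l| ≤ U)
    (h : ℝ → ℝ)
    (hh : ∀ x : ℝ, (h x : ℂ) =
      (1 / (2 * Real.pi)) * ∫ l : ℝ, Complex.exp (Complex.I * x * l) * (ρ l : ℂ))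
    (μ : ℝ) (hμ₁ : -(1 / U) < μ) (hμ₂ : μ < 1 / U) (hμ₃ : μ ≠ 1)
    (ξ : ℝ) (hξ : 0 < ξ)
    -- the improper integral of `h` over `(x,∞)`, for every `x`; for `x = 0` it equals `1/2`
    (J : ℝ → ℝ)
    (hJ : ∀ x : ℝ, Tendsto (fun T : ℝ => ∫ s in x..T, h s) atTop (nhds (J x)))
    (hJ0 : J 0 = 1 / 2)
    -- the operator `S_ξ` and its (two-sided) inverse `T`
    (S T : Lp ℂ 2 (volume.restrict (Ioo (0 : ℝ) ξ)) →L[ℂ]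
           Lp ℂ 2 (volume.restrict (Ioo (0 : ℝ) ξ)))
    (hS : ∀ f : Lp ℂ 2 (volume.restrict (Ioo (0 : ℝ) ξ)),
      (S f : ℝ → ℂ) =ᵐ[volume.restrict (Ioo (0 : ℝ) ξ)]
        fun x => f x - (μ : ℂ) * ∫ t in Ioo (0 : ℝ) ξ, (h (x - t) : ℂ) * f t)
    (hST : S.comp T = ContinuousLinearMap.id ℂ _)
    (hTS : T.comp S = ContinuousLinearMap.id ℂ _)
    -- the constant function `1` and the function `q(x) = μ ∫_x^∞ h(s) ds`, as elements of `L²(0,ξ)`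
    (one : Lp ℂ 2 (volume.restrict (Ioo (0 : ℝ) ξ)))
    (hone : (one : ℝ → ℂ) =ᵐ[volume.restrict (Ioo (0 : ℝ) ξ)] fun _ => 1)
    (qLp : Lp ℂ 2 (volume.restrict (Ioo (0 : ℝ) ξ)))
    (hq : (qLp : ℝ → ℂ) =ᵐ[volume.restrict (Ioo (0 : ℝ) ξ)] fun x => ((μ * J x : ℝ) : ℂ)) :
    (T one : ℝ → ℂ) =ᵐ[volume.restrict (Ioo (0 : ℝ) ξ)]
      fun x => (1 / (1 - (μ : ℂ))) * (1 - (T qLp : ℝ → ℂ) x - (T qLp : ℝ → ℂ) (ξ - x)) := by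
  have hc : Continuous h := aux_cont ρ hρ_int h hh
  have he : ∀ x, h (-x) = h x := aux_even ρ hρ_even h hh
  have hii : ∀ a b, IntervalIntegrable h volume a b := fun a b => hc.intervalIntegrable a b
  have mp := aux_refl ξ
  have hJx : ∀ x, J x = 1 / 2 - ∫ s in (0:ℝ)..x, h s := by
    intro x
    have h1 : Tendsto (fun T : ℝ => (∫ s in (0:ℝ)..T, h s) - ∫ s in (0:ℝ)..x, h s) atTop
        (nhds (J 0 - ∫ s in (0:ℝ)..x, h s)) := (hJ 0).sub_const _
    have h2 : (fun T : ℝ => (∫ s in (0:ℝ)..T, h s) - ∫ s in (0:ℝ)..x, h s)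
        = fun T : ℝ => ∫ s in x..T, h s := by
      ext T
      rw [intervalIntegral.integral_interval_sub_left (hii _ _) (hii _ _)]
    rw [h2] at h1
    rw [← hJ0]
    exact tendsto_nhds_unique (hJ x) h1
  have hker : ∀ x, (∫ t in Ioo (0 : ℝ) ξ, (h (x - t) : ℂ)) =
      (((1 / 2 - J x) + (1 / 2 - J (ξ - x)) : ℝ) : ℂ) := by
    intro x
    rw [integral_complex_ofReal, ← integral_Ioc_eq_integral_Ioo,
      ← intervalIntegral.integral_of_le hξ.le,
      intervalIntegral.integral_comp_sub_left (fun s => h s) x, hJx, hJx]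
    have h3 : (∫ s in (x - ξ)..(0:ℝ), h s) = ∫ s in (0:ℝ)..(ξ - x), h s := by
      have := intervalIntegral.integral_comp_neg (a := (0:ℝ)) (b := ξ - x) (fun s => h s)
      simp only [he, neg_zero, neg_sub] at this
      exact this.symm
    have h4 := intervalIntegral.integral_add_adjacent_intervals (hii (x - ξ) 0) (hii 0 x)
    rw [sub_zero, ← h4, h3]
    congr 1
    ring
  let R : Lp ℂ 2 (volume.restrict (Ioo (0 : ℝ) ξ)) → Lp ℂ 2 (volume.restrict (Ioo (0 : ℝ) ξ)) :=
    fun f => Lp.compMeasurePreserving (fun x : ℝ => ξ - x) mp f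
  have hR : ∀ f, (R f : ℝ → ℂ) =ᵐ[volume.restrict (Ioo (0 : ℝ) ξ)] fun x => f (ξ - x) :=
    fun f => Lp.coeFn_compMeasurePreserving f mp
  have hSR : ∀ f, S (R f) = R (S f) := by
    intro f
    apply Lp.ext
    have hS' := mp.quasiMeasurePreserving.ae (hS f)
    filter_upwards [hS (R f), hR f, hR (S f), hS'] with x h1 h2 h3 h4
    rw [h1, h2, h3, h4]
    congr 2
    rw [← aux_int ξ (fun t => (h (ξ - x - t) : ℂ) * f t)]
    apply integral_congr_ae
    filter_upwards [hR f] with t ht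
    rw [ht, show ξ - x - (ξ - t) = -(x - t) by ring, he]
  have hTSf : ∀ f, T (S f) = f := fun f => by
    simpa using congrArg (fun L => L f) hTS
  have hSTf : ∀ f, S (T f) = f := fun f => by
    simpa using congrArg (fun L => L f) hST
  have hTR : T (R qLp) = R (T qLp) := by
    conv_lhs => rw [← hSTf qLp, ← hSR, hTSf]
  have hSone : S one = (1 - (μ : ℂ)) • one + qLp + R qLp := by
    apply Lp.ext
    have hq' := mp.quasiMeasurePreserving.ae hq
    filter_upwards [hS one, hone, hq, hR qLp, hq', Lp.coeFn_add ((1 - (μ : ℂ)) • one + qLp) (R qLp),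
      Lp.coeFn_add ((1 - (μ : ℂ)) • one) qLp, Lp.coeFn_smul (1 - (μ : ℂ)) one]
      with x h1 h2 h3 h4 h5 h6 h7 h8
    rw [h1, h6, Pi.add_apply, h7, Pi.add_apply, h8, Pi.smul_apply, h2, h3, h4, h5]
    have h9 : (∫ t in Ioo (0 : ℝ) ξ, (h (x - t) : ℂ) * one t) =
        ∫ t in Ioo (0 : ℝ) ξ, (h (x - t) : ℂ) := by
      apply integral_congr_ae
      filter_upwards [hone] with t ht
      rw [ht, mul_one]
    rw [h9, hker]
    push_cast
    rw [smul_eq_mul]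
    ring
  have hfin : one = (1 - (μ : ℂ)) • T one + T qLp + R (T qLp) := by
    rw [← hTR, ← map_smul, ← map_add, ← map_add, ← hSone, hTSf]
  have hne : (1 - (μ : ℂ)) ≠ 0 := by
    intro h0
    apply hμ₃
    have : (μ : ℂ) = 1 := (sub_eq_zero.mp h0).symm
    exact_mod_cast this
  have hone' := hone
  rw [hfin] at hone'
  filter_upwards [hone', hR (T qLp), Lp.coeFn_add ((1 - (μ : ℂ)) • T one + T qLp) (R (T qLp)),
      Lp.coeFn_add ((1 - (μ : ℂ)) • T one) (T qLp), Lp.coeFn_smul (1 - (μ : ℂ)) (T one)]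
      with x h1 h2 h6 h7 h8
  rw [h6, Pi.add_apply, h7, Pi.add_apply, h8, Pi.smul_apply, h2, smul_eq_mul] at h1
  field_simp
  linear_combination h1
end
end

section
/- Let S be a bounded, positive definite, invertible operator on L²(0,∞) which admits a left triangular factorization S = S₋S₋*. For ξ > 0 let S_ξ = P_ξ S P_ξ regarded as an operator on the subspace P_ξ L²(0,∞). Then each S_ξ is invertible on P_ξ L²(0,∞), and for every f ∈ L²(0,∞) one has S_ξ^{−1} P_ξ f → S^{−1} f in L²(0,∞) as ξ → ∞. -/
open MeasureTheory Complex Set Filter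
open scoped ComplexInnerProductSpace

noncomputable section

local notation "L2" => Lp ℂ 2 (volume.restrict (Ioi (0 : ℝ)))

/-- An operator is lower triangular (w.r.t. the projections `Q ξ = I − P ξ`) if
`S₋ Q_ξ = Q_ξ S₋ Q_ξ` for every `ξ > 0`. -/
def IsLowerTriangular (Q : ℝ → (L2 →L[ℂ] L2)) (A : L2 →L[ℂ] L2) : Prop :=
  ∀ ξ : ℝ, 0 < ξ → A.comp (Q ξ) = (Q ξ).comp (A.comp (Q ξ))

/-- `S` admits a left triangular factorization `S = S₋ S₋*` with `S₋, S₋⁻¹` bounded and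
lower triangular. -/
def AdmitsLeftTriangularFactorization (Q : ℝ → (L2 →L[ℂ] L2))
    (S : L2 →L[ℂ] L2) : Prop :=
  ∃ Sm Sminv : L2 →L[ℂ] L2,
    IsLowerTriangular Q Sm ∧ IsLowerTriangular Q Sminv ∧
    Sm.comp Sminv = ContinuousLinearMap.id ℂ L2 ∧
    Sminv.comp Sm = ContinuousLinearMap.id ℂ L2 ∧
    S = Sm.comp (ContinuousLinearMap.adjoint Sm)

theorem P_strong (P : ℝ → (L2 →L[ℂ] L2))
    (hP : ∀ (ξ : ℝ) (f : L2), (P ξ f : ℝ → ℂ) =ᵐ[volume.restrict (Ioi (0 : ℝ))]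
      fun x => if x < ξ then f x else 0) (f : L2) :
    Tendsto (fun ξ : ℝ => P ξ f) atTop (nhds f) := by
  rw [Lp.tendsto_Lp_iff_tendsto_eLpNorm']
  have h2 : ∀ ξ : ℝ, eLpNorm ((P ξ f : ℝ → ℂ) - (f : ℝ → ℂ)) 2 (volume.restrict (Ioi (0 : ℝ))) =
      (∫⁻ x, ‖(if x < ξ then 0 else f x : ℂ)‖ₑ ^ (2 : ℝ)
        ∂(volume.restrict (Ioi (0 : ℝ)))) ^ (1 / (2 : ℝ)) := by
    intro ξ
    rw [eLpNorm_eq_lintegral_rpow_enorm_toReal (by norm_num) (by norm_num)]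
    simp only [ENNReal.toReal_ofNat]
    congr 1
    apply lintegral_congr_ae
    filter_upwards [hP ξ f] with x hx
    simp only [Pi.sub_apply, hx]
    split_ifs <;> simp
  simp_rw [h2]
  have h3 : Tendsto (fun ξ : ℝ => ∫⁻ x, ‖(if x < ξ then 0 else f x : ℂ)‖ₑ ^ (2 : ℝ)
        ∂(volume.restrict (Ioi (0 : ℝ)))) atTop
      (nhds (∫⁻ _, 0 ∂(volume.restrict (Ioi (0 : ℝ))))) := by
    apply tendsto_lintegral_filter_of_dominated_convergence
      (fun x => ‖(f x : ℂ)‖ₑ ^ (2 : ℝ))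
    · refine Eventually.of_forall fun ξ => ?_
      have hf : Measurable (f : ℝ → ℂ) := (Lp.stronglyMeasurable f).measurable
      exact ((Measurable.ite measurableSet_Iio measurable_const hf).enorm).pow_const _
    · refine Eventually.of_forall fun ξ => Eventually.of_forall fun x => ?_
      split_ifs <;> simp
    · have h := lintegral_rpow_enorm_lt_top_of_eLpNorm_lt_top (p := 2) (by norm_num)
        (by norm_num) (Lp.memLp f).2
      simpa using h.ne
    · refine Eventually.of_forall fun x => ?_
      apply tendsto_const_nhds.congr'
      filter_upwards [eventually_gt_atTop x] with ξ hξ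
      simp [hξ]
  have h4 := h3.ennrpow_const (1 / (2 : ℝ))
  simpa using h4

theorem P_idem (P : ℝ → (L2 →L[ℂ] L2))
    (hP : ∀ (ξ : ℝ) (f : L2), (P ξ f : ℝ → ℂ) =ᵐ[volume.restrict (Ioi (0 : ℝ))]
      fun x => if x < ξ then f x else 0) (ξ : ℝ) : P ξ * P ξ = P ξ := by
  ext1 f
  apply Lp.ext
  change (P ξ (P ξ f) : ℝ → ℂ) =ᵐ[_] _
  filter_upwards [hP ξ f, hP ξ (P ξ f)] with x h1 h2
  rw [h2, h1]
  split_ifs <;> rfl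

theorem P_adj (P : ℝ → (L2 →L[ℂ] L2))
    (hP : ∀ (ξ : ℝ) (f : L2), (P ξ f : ℝ → ℂ) =ᵐ[volume.restrict (Ioi (0 : ℝ))]
      fun x => if x < ξ then f x else 0) (ξ : ℝ) : star (P ξ) = P ξ := by
  symm
  change P ξ = ContinuousLinearMap.adjoint (P ξ)
  rw [ContinuousLinearMap.eq_adjoint_iff]
  intro f g
  rw [L2.inner_def, L2.inner_def]
  apply integral_congr_ae
  filter_upwards [hP ξ f, hP ξ g] with x h1 h2
  rw [h1, h2]
  split_ifs <;> simp

theorem P_lower (P Q : ℝ → (L2 →L[ℂ] L2))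
    (hQ : ∀ ξ : ℝ, Q ξ = ContinuousLinearMap.id ℂ L2 - P ξ) (A : L2 →L[ℂ] L2)
    (hA : IsLowerTriangular Q A) (ξ : ℝ) (hξ : 0 < ξ) (hi : P ξ * P ξ = P ξ) :
    P ξ * A * P ξ = P ξ * A := by
  have h : A * Q ξ = Q ξ * (A * Q ξ) := hA ξ hξ
  have hq : Q ξ = 1 - P ξ := hQ ξ
  have h0 : P ξ * (A * (1 - P ξ)) = 0 := by
    rw [← hq, h, hq, ← mul_assoc, mul_sub, hi]
    simp
  rw [mul_sub, mul_sub, mul_one, sub_eq_zero] at h0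
  rw [mul_assoc, ← h0]

/-- If `S` is bounded, positive definite, invertible and admits a left
triangular factorization, then the compressions `S_ξ = P_ξ S P_ξ` are invertible on
`P_ξ L²(0,∞)` and `S_ξ^{−1} P_ξ f → S^{−1} f` as `ξ → ∞`. -/
theorem statement8
    (P : ℝ → (L2 →L[ℂ] L2))
    (hP : ∀ (ξ : ℝ) (f : L2), (P ξ f : ℝ → ℂ) =ᵐ[volume.restrict (Ioi (0 : ℝ))]
      fun x => if x < ξ then f x else 0)
    (Q : ℝ → (L2 →L[ℂ] L2))
    (hQ : ∀ ξ : ℝ, Q ξ = ContinuousLinearMap.id ℂ L2 - P ξ)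
    (S Sinv : L2 →L[ℂ] L2)
    (hpos : ∃ δ : ℝ, 0 < δ ∧ ∀ f : L2, δ * ‖f‖ ^ 2 ≤ (⟪S f, f⟫).re)
    (hSinv₁ : S.comp Sinv = ContinuousLinearMap.id ℂ L2)
    (hSinv₂ : Sinv.comp S = ContinuousLinearMap.id ℂ L2)
    (hfact : AdmitsLeftTriangularFactorization Q S) :
    ∃ T : ℝ → (L2 →L[ℂ] L2),
      (∀ ξ : ℝ, 0 < ξ →
        (∀ f : L2, T ξ f = P ξ (T ξ (P ξ f))) ∧
        ((P ξ).comp (S.comp (P ξ))).comp (T ξ) = P ξ ∧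
        (T ξ).comp ((P ξ).comp (S.comp (P ξ))) = P ξ) ∧
      (∀ f : L2, Tendsto (fun ξ : ℝ => T ξ (P ξ f)) atTop (nhds (Sinv f))) := by
  obtain ⟨A, B, hA, hB, hAB, hBA, hS⟩ := hfact
  replace hAB : A * B = 1 := hAB
  replace hBA : B * A = 1 := hBA
  replace hS : S = A * star A := hS
  have hBA' : star A * star B = 1 := by rw [← star_mul, hBA, star_one]
  have hAB' : star B * star A = 1 := by rw [← star_mul, hAB, star_one]
  have hinv : Sinv = star B * B := by
    have h1 : S * Sinv = 1 := hSinv₁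
    calc Sinv = star B * (B * A) * star A * Sinv := by rw [hBA, mul_one, hAB', one_mul]
      _ = star B * B * (S * Sinv) := by rw [hS]; simp only [mul_assoc]
      _ = star B * B := by rw [h1, mul_one]
  have key : ∀ ξ : ℝ, 0 < ξ → P ξ * P ξ = P ξ ∧ P ξ * A * P ξ = P ξ * A ∧
      P ξ * B * P ξ = P ξ * B ∧ P ξ * star A * P ξ = star A * P ξ ∧
      P ξ * star B * P ξ = star B * P ξ := by
    intro ξ hξ
    have hi := P_idem P hP ξ
    have ha := P_adj P hP ξ
    have h1 := P_lower P Q hQ A hA ξ hξ hi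
    have h2 := P_lower P Q hQ B hB ξ hξ hi
    refine ⟨hi, h1, h2, ?_, ?_⟩
    · have := congrArg star h1
      simpa only [star_mul, ha, mul_assoc] using this
    · have := congrArg star h2
      simpa only [star_mul, ha, mul_assoc] using this
  refine ⟨fun ξ => star B * P ξ * B, ?_, ?_⟩
  · intro ξ hξ
    obtain ⟨hi, h1, h2, h3, h4⟩ := key ξ hξ
    refine ⟨?_, ?_, ?_⟩
    · have h : star B * P ξ * B = P ξ * ((star B * P ξ * B) * P ξ) := by
        calc star B * P ξ * B = P ξ * star B * P ξ * B := by rw [h4]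
          _ = P ξ * star B * (P ξ * B) := by simp only [mul_assoc]
          _ = P ξ * star B * (P ξ * B * P ξ) := by rw [h2]
          _ = _ := by simp only [mul_assoc]
      intro f
      exact congrArg (fun X : L2 →L[ℂ] L2 => X f) h
    · change (P ξ * (S * P ξ)) * (star B * P ξ * B) = P ξ
      calc (P ξ * (S * P ξ)) * (star B * P ξ * B)
          = P ξ * S * (P ξ * star B * P ξ) * B := by simp only [mul_assoc]
        _ = P ξ * A * (star A * star B) * P ξ * B := by rw [h4, hS]; simp only [mul_assoc]
        _ = P ξ * A * P ξ * B := by rw [hBA', mul_one]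
        _ = P ξ * (A * B) := by rw [h1, mul_assoc]
        _ = P ξ := by rw [hAB, mul_one]
    · change (star B * P ξ * B) * (P ξ * (S * P ξ)) = P ξ
      calc (star B * P ξ * B) * (P ξ * (S * P ξ))
          = star B * (P ξ * B * P ξ) * S * P ξ := by simp only [mul_assoc]
        _ = star B * P ξ * (B * A) * star A * P ξ := by rw [h2, hS]; simp only [mul_assoc]
        _ = star B * (P ξ * star A * P ξ) := by rw [hBA, mul_one]; simp only [mul_assoc]
        _ = (star B * star A) * P ξ := by rw [h3, mul_assoc]
        _ = P ξ := by rw [hAB', one_mul]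
  · intro f
    have h := ((star B).continuous.tendsto (B f)).comp (P_strong P hP (B f))
    rw [hinv]
    refine h.congr' ?_
    filter_upwards [eventually_gt_atTop (0 : ℝ)] with ξ hξ
    obtain ⟨hi, h1, h2, h3, h4⟩ := key ξ hξ
    have e : star B * (P ξ * B) = star B * P ξ * B * P ξ := by
      rw [← h2]; simp only [mul_assoc]
    exact congrArg (fun X : L2 →L[ℂ] L2 => X f) e
end
end

section
/- For every z ∈ ℂ with Im z > 0, the function t ↦ (1 + tz)/((z − t)(1 + t²)) is Lebesgue integrable on ℝ and ∫_{−∞}^∞ (1 + tz)/((z − t)(1 + t²)) dt = −πi. Consequently, for any constant c > 0, −(1/(2πi)) ∫_{−∞}^∞ (1 + tz)/((z − t)(1 + t²)) (log c) dt = (1/2) log c. -/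
open MeasureTheory Complex Filter

noncomputable section

lemma aux_ne (z : ℂ) (hz : 0 < z.im) (t : ℝ) : z - t ≠ 0 := by
  intro h
  have := congrArg Complex.im h
  simp at this
  linarith

lemma aux_sq (t : ℝ) : (1 + (t : ℂ) ^ 2) ≠ 0 := by
  have : (1 + t ^ 2 : ℝ) ≠ 0 := by positivity
  exact_mod_cast this

lemma aux_slit (z : ℂ) (hz : 0 < z.im) (t : ℝ) : (z - t) / (I - t) ∈ slitPlane := by
  rw [Complex.mem_slitPlane_iff]
  by_contra! h
  obtain ⟨h1, h2⟩ := h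
  have hI := aux_ne I (by simp) t
  have h3 : z - t = ((z - t) / (I - t)) * (I - t) := by field_simp
  have h4 := congrArg Complex.im h3
  rw [Complex.mul_im, h2] at h4
  simp only [sub_im, ofReal_im, I_im, sub_zero, mul_one, zero_mul, add_zero] at h4
  linarith

lemma aux_int_s11 (z : ℂ) (hz : 0 < z.im) :
    Integrable (fun t : ℝ => (1 + (t : ℂ) * z) / ((z - t) * (1 + (t : ℂ) ^ 2))) := by
  have h1 : Integrable (fun t : ℝ => (((1 + t ^ 2)⁻¹ : ℝ) : ℂ)) :=
    integrable_inv_one_add_sq.ofReal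
  have h2 : Continuous (fun t : ℝ => (1 + (t : ℂ) * z) / (z - t)) :=
    Continuous.div (by fun_prop) (by fun_prop) (aux_ne z hz)
  have h3 := h1.bdd_mul (c := ‖z‖ + ‖1 + z ^ 2‖ / z.im) h2.aestronglyMeasurable
    (Eventually.of_forall fun t => by
      have hne := aux_ne z hz t
      have e : (1 + (t : ℂ) * z) / (z - t) = -z + (1 + z ^ 2) / (z - t) := by
        field_simp
        ring
      rw [e]
      refine (norm_add_le _ _).trans ?_
      rw [norm_neg, norm_div]
      gcongr
      have := Complex.abs_im_le_norm (z - t)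
      simp only [sub_im, ofReal_im, sub_zero] at this
      exact (le_abs_self _).trans this)
  refine h3.congr (Eventually.of_forall fun t => ?_)
  have hne := aux_ne z hz t
  have := aux_sq t
  simp only
  push_cast
  field_simp

lemma aux_deriv (z : ℂ) (hz : 0 < z.im) (t : ℝ) :
    HasDerivAt (fun t : ℝ => -Complex.log ((z - t) / (I - t)) - I * (Real.arctan t : ℂ))
      ((1 + (t : ℂ) * z) / ((z - t) * (1 + (t : ℂ) ^ 2))) t := by
  have hne := aux_ne z hz t
  have hI := aux_ne I (by simp) t
  have hsq := aux_sq t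
  have hid : HasDerivAt (fun t : ℝ => (t : ℂ)) 1 t := (hasDerivAt_id t).ofReal_comp
  have hq := ((hid.const_sub z).div (hid.const_sub I) hI)
  have hl := hq.clog_real (aux_slit z hz t)
  have ha := ((Real.hasDerivAt_arctan t).ofReal_comp).const_mul I
  refine (hl.neg.sub ha).congr_deriv ?_
  have e : (1 + (t : ℂ) ^ 2) = (I - t) * (-I - t) := by
    linear_combination (-1 : ℂ) * (-I_sq)
  have hI2 : -I - (t : ℂ) ≠ 0 := by
    intro h; rw [h, mul_zero] at e; exact hsq e
  simp only [Pi.div_apply]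
  push_cast
  rw [e]
  field_simp
  ring_nf
  simp only [I_sq, I_pow_three]
  ring

lemma aux_tend (z : ℂ) (l : Filter ℝ) (hl : Tendsto (fun t : ℝ => ‖(t : ℂ)‖) l atTop) :
    Tendsto (fun t : ℝ => -Complex.log ((z - t) / (I - t))) l (nhds 0) := by
  have h1 : Tendsto (fun t : ℝ => I - (t : ℂ)) l (Bornology.cobounded ℂ) := by
    rw [← tendsto_norm_atTop_iff_cobounded]
    refine tendsto_atTop_mono (f := fun t : ℝ => ‖(t : ℂ)‖ + (-1)) (fun t => ?_)
      (tendsto_atTop_add_const_right l (-1) hl)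
    have := norm_sub_norm_le (t : ℂ) I
    rw [norm_sub_rev, norm_I] at this
    linarith
  have h2 := (tendsto_inv₀_cobounded.comp h1).const_mul (z - I) |>.const_add 1
  have h3 : Tendsto (fun t : ℝ => (z - t) / (I - t)) l (nhds 1) := by
    simp only [mul_zero, add_zero] at h2
    refine h2.congr fun t => ?_
    have hI := aux_ne I (by simp) t
    simp only [Function.comp]
    field_simp
    ring
  have h4 := (h3.clog (by simp)).neg
  simpa using h4

lemma aux_val (z : ℂ) (hz : 0 < z.im) :
    (∫ t : ℝ, (1 + (t : ℂ) * z) / ((z - t) * (1 + (t : ℂ) ^ 2))) = -Real.pi * Complex.I := by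
  have ht := (aux_tend z atTop (by simpa using tendsto_abs_atTop_atTop)).sub
    (((Complex.continuous_ofReal.tendsto _).comp
      (Real.tendsto_arctan_atTop.mono_right nhdsWithin_le_nhds)).const_mul I)
  have hb := (aux_tend z atBot (by simpa using tendsto_abs_atBot_atTop)).sub
    (((Complex.continuous_ofReal.tendsto _).comp
      (Real.tendsto_arctan_atBot.mono_right nhdsWithin_le_nhds)).const_mul I)
  rw [integral_of_hasDerivAt_of_tendsto (aux_deriv z hz) (aux_int_s11 z hz) hb ht]
  push_cast
  ring

/-- For `Im z > 0`, the function `t ↦ (1 + tz)/((z − t)(1 + t²))` is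
integrable on `ℝ` with `∫ = −πi`; consequently for `c > 0`,
`−(1/(2πi)) ∫ (1 + tz)/((z − t)(1 + t²)) (log c) dt = (1/2) log c`. -/
theorem statement11
    (z : ℂ) (hz : 0 < z.im) :
    Integrable (fun t : ℝ => (1 + (t : ℂ) * z) / ((z - t) * (1 + (t : ℂ) ^ 2))) ∧
    (∫ t : ℝ, (1 + (t : ℂ) * z) / ((z - t) * (1 + (t : ℂ) ^ 2))) = -Real.pi * Complex.I ∧
    (∀ c : ℝ, 0 < c →
      -(1 / (2 * Real.pi * Complex.I)) *
          ∫ t : ℝ, ((1 + (t : ℂ) * z) / ((z - t) * (1 + (t : ℂ) ^ 2))) * (Real.log c : ℂ)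
        = (1 / 2) * (Real.log c : ℂ)) := by
  refine ⟨aux_int_s11 z hz, aux_val z hz, fun c _ => ?_⟩
  rw [integral_mul_const, aux_val z hz]
  have hp : (Real.pi : ℂ) ≠ 0 := by exact_mod_cast Real.pi_ne_zero
  have hI := I_ne_zero
  field_simp
end
end

section
/- Let z ∈ ℂ and let q₁ : [0,∞) → (0,∞) be differentiable with q₁(0) = 1; set q₂(x) = 1/(2 q₁(x)) and B(x) = q₁′(x)/q₁(x). Let H(x) be the 2×2 matrix with rows (q₂(x)², 1/2) and (1/2, q₁(x)²), J the matrix with rows (0,1) and (1,0), j = diag(1,−1), Γ(x) the matrix with rows (0, B(x)) and (B(x), 0), and T(x) the matrix with rows (q₁(x), −q₁(x)) and (q₂(x), q₂(x)). If W : [0,∞) → M₂(ℂ) is differentiable and solves W′(x) = iz J H(x) W(x) with W(0) = I₂, then V(x) = e^{−ixz/2} T(x)^{−1} W(x) T(0) solves V′(x) = (iz/2) j V(x) + Γ(x) V(x) with V(0) = I₂. -/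
open Complex Set Matrix

noncomputable section

/-- If `W` solves `W′ = iz J H(x) W`, `W(0) = I₂`, with
`H(x) = !![q₂², 1/2; 1/2, q₁²]`, `J = !![0,1;1,0]`, then
`V(x) = e^{−ixz/2} T(x)⁻¹ W(x) T(0)` solves `V′ = (iz/2) j V + Γ(x) V`, `V(0) = I₂`, where
`j = diag(1,−1)`, `Γ(x) = !![0, B; B, 0]`, `B = q₁′/q₁`, `q₂ = 1/(2q₁)`, and
`T(x) = !![q₁, −q₁; q₂, q₂]`. -/
theorem statement19
    (z : ℂ) (q₁ q₁' : ℝ → ℝ)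
    (hq₁_pos : ∀ x : ℝ, 0 ≤ x → 0 < q₁ x)
    (hq₁0 : q₁ 0 = 1)
    (hq₁_deriv : ∀ x : ℝ, 0 ≤ x → HasDerivWithinAt q₁ (q₁' x) (Ici (0 : ℝ)) x)
    (q₂ : ℝ → ℝ) (hq₂ : ∀ x : ℝ, q₂ x = 1 / (2 * q₁ x))
    (B : ℝ → ℝ) (hB : ∀ x : ℝ, B x = q₁' x / q₁ x)
    (H : ℝ → Matrix (Fin 2) (Fin 2) ℂ)
    (hH : ∀ x : ℝ, H x = !![((q₂ x : ℂ)) ^ 2, 1 / 2; 1 / 2, ((q₁ x : ℂ)) ^ 2])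
    (J : Matrix (Fin 2) (Fin 2) ℂ) (hJ : J = !![0, 1; 1, 0])
    (j : Matrix (Fin 2) (Fin 2) ℂ) (hj : j = !![1, 0; 0, -1])
    (Γ : ℝ → Matrix (Fin 2) (Fin 2) ℂ)
    (hΓ : ∀ x : ℝ, Γ x = !![0, (B x : ℂ); (B x : ℂ), 0])
    (T : ℝ → Matrix (Fin 2) (Fin 2) ℂ)
    (hT : ∀ x : ℝ, T x = !![(q₁ x : ℂ), -(q₁ x : ℂ); (q₂ x : ℂ), (q₂ x : ℂ)])
    (W : ℝ → Matrix (Fin 2) (Fin 2) ℂ)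
    (hW_deriv : ∀ x : ℝ, 0 ≤ x → ∀ i k : Fin 2,
      HasDerivWithinAt (fun t => W t i k)
        (((Complex.I * z) • (J * H x * W x)) i k) (Ici (0 : ℝ)) x)
    (hW0 : W 0 = 1)
    (V : ℝ → Matrix (Fin 2) (Fin 2) ℂ)
    (hV : ∀ x : ℝ, V x = Complex.exp (-(Complex.I * x * z) / 2) • ((T x)⁻¹ * W x * T 0)) :
    (∀ x : ℝ, 0 ≤ x → ∀ i k : Fin 2,
      HasDerivWithinAt (fun t => V t i k)
        ((((Complex.I * z / 2) • (j * V x)) + Γ x * V x) i k) (Ici (0 : ℝ)) x) ∧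
    V 0 = 1 := by
  have hq1C : ∀ x : ℝ, 0 ≤ x → (q₁ x : ℂ) ≠ 0 := fun x hx => by
    exact_mod_cast (hq₁_pos x hx).ne'
  have hq2C : ∀ x : ℝ, (q₂ x : ℂ) = 1 / (2 * (q₁ x : ℂ)) := fun x => by
    rw [hq₂]; push_cast; rfl
  have hdet : ∀ x : ℝ, 0 ≤ x → (T x).det = 1 := fun x hx => by
    have := hq1C x hx
    rw [hT, Matrix.det_fin_two_of, hq2C]
    field_simp
    norm_num
  have hinv : ∀ x : ℝ, 0 ≤ x →
      (T x)⁻¹ = !![(q₂ x : ℂ), (q₁ x : ℂ); -(q₂ x : ℂ), (q₁ x : ℂ)] := fun x hx => by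
    rw [Matrix.inv_def, hdet x hx, hT, Matrix.adjugate_fin_two_of]
    simp
  refine ⟨?_, ?_⟩
  · intro x hx i k
    have hne := hq1C x hx
    have hneR := (hq₁_pos x hx).ne'
    have d1 : HasDerivWithinAt (fun t : ℝ => (q₁ t : ℂ)) ((q₁' x : ℝ) : ℂ) (Ici 0) x :=
      (hq₁_deriv x hx).ofReal_comp
    have d2 : HasDerivWithinAt (fun t : ℝ => (q₂ t : ℂ))
        (-(q₁' x : ℂ) / (2 * (q₁ x : ℂ) ^ 2)) (Ici 0) x := by
      have h := (d1.const_mul (2 : ℂ)).inv (mul_ne_zero two_ne_zero hne)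
      have hf : (fun t : ℝ => (q₂ t : ℂ)) = (fun t : ℝ => 2 * (q₁ t : ℂ))⁻¹ := by
        funext t
        simp [hq2C]
      rw [hf]
      refine h.congr_deriv ?_
      field_simp
      try ring
    have de : HasDerivWithinAt (fun t : ℝ => Complex.exp (-(Complex.I * t * z) / 2))
        (Complex.exp (-(Complex.I * x * z) / 2) * (-(Complex.I * z) / 2)) (Ici 0) x := by
      have h0 : HasDerivAt (fun t : ℝ => (t : ℂ)) 1 x := Complex.ofRealCLM.hasDerivAt
      have h := ((((h0.const_mul Complex.I).mul_const z).neg.div_const 2).cexp).hasDerivWithinAt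
        (s := Ici (0 : ℝ))
      refine h.congr_deriv ?_
      simp only [Pi.neg_apply]
      ring
    have w := hW_deriv x hx
    have key : ∀ (s : ℂ) (c0 c1 : ℂ), HasDerivWithinAt
        (fun t : ℝ => Complex.exp (-(Complex.I * t * z) / 2) *
          ((s * (q₂ t : ℂ) * W t 0 0 + (q₁ t : ℂ) * W t 1 0) * c0 +
           (s * (q₂ t : ℂ) * W t 0 1 + (q₁ t : ℂ) * W t 1 1) * c1)) _ (Ici 0) x :=
      fun s c0 c1 => de.mul (((((d2.const_mul s).mul (w 0 0)).add (d1.mul (w 1 0))).mul_const c0).add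
        ((((d2.const_mul s).mul (w 0 1)).add (d1.mul (w 1 1))).mul_const c1))
    have hV0 : ∀ t : ℝ, 0 ≤ t → ∀ k, V t 0 k = Complex.exp (-(Complex.I * t * z) / 2) *
          ((1 * (q₂ t : ℂ) * W t 0 0 + (q₁ t : ℂ) * W t 1 0) * T 0 0 k +
           (1 * (q₂ t : ℂ) * W t 0 1 + (q₁ t : ℂ) * W t 1 1) * T 0 1 k) := fun t ht k => by
      rw [hV, hinv t ht]
      simp only [Matrix.smul_apply, Matrix.mul_apply, Fin.sum_univ_two, smul_eq_mul]
      simp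
    have hV1 : ∀ t : ℝ, 0 ≤ t → ∀ k, V t 1 k = Complex.exp (-(Complex.I * t * z) / 2) *
          (((-1) * (q₂ t : ℂ) * W t 0 0 + (q₁ t : ℂ) * W t 1 0) * T 0 0 k +
           ((-1) * (q₂ t : ℂ) * W t 0 1 + (q₁ t : ℂ) * W t 1 1) * T 0 1 k) := fun t ht k => by
      rw [hV, hinv t ht]
      simp only [Matrix.smul_apply, Matrix.mul_apply, Fin.sum_univ_two, smul_eq_mul]
      simp
    have hBC : (B x : ℂ) = (q₁' x : ℂ) / (q₁ x : ℂ) := by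
      rw [hB]; push_cast; rfl
    fin_cases i
    · refine ((key 1 (T 0 0 k) (T 0 1 k)).congr (fun t ht => hV0 t ht k) (hV0 x hx k)).congr_deriv ?_
      simp only [Matrix.add_apply, Matrix.smul_apply, Matrix.mul_apply, Fin.sum_univ_two, hj, hJ,
        hΓ, hH, smul_eq_mul, Fin.zero_eta, Fin.mk_one, hV0 x hx k, hV1 x hx k, hBC, hq2C]
      simp
      field_simp
      ring
    · refine ((key (-1) (T 0 0 k) (T 0 1 k)).congr (fun t ht => hV1 t ht k) (hV1 x hx k)).congr_deriv ?_
      simp only [Matrix.add_apply, Matrix.smul_apply, Matrix.mul_apply, Fin.sum_univ_two, hj, hJ,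
        hΓ, hH, smul_eq_mul, Fin.zero_eta, Fin.mk_one, hV0 x hx k, hV1 x hx k, hBC, hq2C]
      simp
      field_simp
      ring
  · rw [hV, hW0, Matrix.mul_one, Matrix.nonsing_inv_mul _ (by rw [hdet 0 le_rfl]; exact isUnit_one)]
    simp
end
end
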